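/- Let n ≥ 1 and bV, bF : ℤ × ℤ → EuclideanSpace ℝ (Fin n). Suppose ρV, ρF : ℤ × ℤ → ℝ and ρ̃V, ρ̃F : ℤ × ℤ → ℝ both satisfy ⟪bV(v), bF(f)⟫ = ρV(v) + ρF(f) and ⟪bV(v), bF(f)⟫ = ρ̃V(v) + ρ̃F(f) for every incident vertex–face pair (v, f). Then there exists ε ∈ ℝ such that ρ̃V(v) = ρV(v) + ε for all v ∈ ℤ × ℤ and ρ̃F(f) = ρF(f) − ε for all f ∈ ℤ × ℤ. (Hence every orthogonal binet has exactly a one-parameter family of Möbius lifts.) -/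

import Mathlib

open scoped InnerProductSpace

/-- A vertex `v` is incident to the face labeled `f` if `v` is one of its four corners. -/
def Incident (v f : ℤ × ℤ) : Prop :=
  v = f ∨ v = f + (1, 0) ∨ v = f + (0, 1) ∨ v = f + (1, 1)

/-- Any two choices of the functions `ρ` (i.e. any two Möbius lifts of an orthogonal binet)
differ by adding a constant `ε` on vertices and subtracting it on faces. -/
theorem stmt_1 (n : ℕ) (hn : 1 ≤ n) (bV bF : ℤ × ℤ → EuclideanSpace ℝ (Fin n))
    (ρV ρF ρV' ρF' : ℤ × ℤ → ℝ)
    (h : ∀ v f : ℤ × ℤ, Incident v f → ⟪bV v, bF f⟫_ℝ = ρV v + ρF f)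
    (h' : ∀ v f : ℤ × ℤ, Incident v f → ⟪bV v, bF f⟫_ℝ = ρV' v + ρF' f) :
    ∃ ε : ℝ, (∀ v : ℤ × ℤ, ρV' v = ρV v + ε) ∧ (∀ f : ℤ × ℤ, ρF' f = ρF f - ε) := by
  have key : ∀ v f : ℤ × ℤ, Incident v f → ρV' v - ρV v = ρF f - ρF' f := by
    intro v f hi
    have h1 := h v f hi
    have h2 := h' v f hi
    linarith
  have hx : ∀ a b : ℤ, ρV' (a + 1, b) - ρV (a + 1, b) = ρV' (a, b) - ρV (a, b) := by
    intro a b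
    rw [key (a + 1, b) (a, b) (by simp [Incident]), key (a, b) (a, b) (by simp [Incident])]
  have hy : ∀ a b : ℤ, ρV' (a, b + 1) - ρV (a, b + 1) = ρV' (a, b) - ρV (a, b) := by
    intro a b
    rw [key (a, b + 1) (a, b) (by simp [Incident]), key (a, b) (a, b) (by simp [Incident])]
  have hx0 : ∀ a b : ℤ, ρV' (a, b) - ρV (a, b) = ρV' (0, b) - ρV (0, b) := by
    intro a b
    induction a using Int.induction_on with
    | zero => rfl
    | succ i ih => rw [hx, ih]
    | pred i ih =>
      have h3 := hx (-(i : ℤ) - 1) b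
      rw [sub_add_cancel] at h3
      rw [← h3, ih]
  have hy0 : ∀ b : ℤ, ρV' (0, b) - ρV (0, b) = ρV' (0, 0) - ρV (0, 0) := by
    intro b
    induction b using Int.induction_on with
    | zero => rfl
    | succ i ih => rw [hy, ih]
    | pred i ih =>
      have h3 := hy 0 (-(i : ℤ) - 1)
      rw [sub_add_cancel] at h3
      rw [← h3, ih]
  have hV : ∀ v : ℤ × ℤ, ρV' v - ρV v = ρV' (0, 0) - ρV (0, 0) := by
    rintro ⟨a, b⟩
    rw [hx0, hy0]
  refine ⟨ρV' (0, 0) - ρV (0, 0), fun v => ?_, fun f => ?_⟩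
  · linarith [hV v]
  · linarith [hV f, key f f (Or.inl rfl)]
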